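/- Let K be any field and L ⊆ ℤ^m a nonzero positive lattice, and let q be the cardinality of T_min. Then bar(I_L) ≥ ⌈q/2⌉; that is, whenever rad(I_L) = rad((B_1,…,B_s)) for binomials B_1,…,B_s ∈ I_L, one has 2s ≥ q. -/

import Mathlib

open MvPolynomial

variable (K : Type*) [Field K]

/-- The monomial `x^w`. -/
noncomputable def mono {m : ℕ} (w : Fin m → ℕ) : MvPolynomial (Fin m) K :=
  ∏ i, X i ^ w i

/-- The positive part `u⁺` of an integer vector. -/
def intPos {m : ℕ} (u : Fin m → ℤ) : Fin m → ℕ := fun i => (u i).toNat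

/-- The negative part `u⁻` of an integer vector. -/
def intNeg {m : ℕ} (u : Fin m → ℤ) : Fin m → ℕ := fun i => (-u i).toNat

/-- Support of a vector of naturals. -/
def suppN {m : ℕ} (w : Fin m → ℕ) : Set (Fin m) := {i | w i ≠ 0}

/-- Support of a vector of integers. -/
def suppZ {m : ℕ} (u : Fin m → ℤ) : Set (Fin m) := {i | u i ≠ 0}

/-- The lattice ideal `I_L`. -/
noncomputable def latticeIdeal {m : ℕ} (L : AddSubgroup (Fin m → ℤ)) :
    Ideal (MvPolynomial (Fin m) K) :=
  Ideal.span {f | ∃ u ∈ L, f = mono K (intPos u) - mono K (intNeg u)}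

/-- A binomial: a difference of two monomials. -/
def IsBinomial {m : ℕ} (f : MvPolynomial (Fin m) K) : Prop :=
  ∃ u v : Fin m → ℕ, f = mono K u - mono K v

/-- `x^w` is an indispensable monomial of `I_L`: every binomial generating set of `I_L`
contains a binomial one of whose monomials is `x^w`. -/
def IsIndispMonomial {m : ℕ} (L : AddSubgroup (Fin m → ℤ)) (w : Fin m → ℕ) : Prop :=
  ∀ B : Set (MvPolynomial (Fin m) K), (∀ f ∈ B, IsBinomial K f) →
    Ideal.span B = latticeIdeal K L →
    ∃ f ∈ B, ∃ v : Fin m → ℕ, f = mono K w - mono K v ∨ f = mono K v - mono K w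

/-- The set `T` of supports of indispensable monomials of `I_L`. -/
def Tsupp {m : ℕ} (L : AddSubgroup (Fin m → ℤ)) : Set (Set (Fin m)) :=
  {E | ∃ w : Fin m → ℕ, IsIndispMonomial K L w ∧ E = suppN w}

/-- `T_min`, the set of minimal elements of `T` with respect to inclusion. -/
def Tmin {m : ℕ} (L : AddSubgroup (Fin m → ℤ)) : Set (Set (Fin m)) :=
  {E ∈ Tsupp K L | ∀ E' ∈ Tsupp K L, E' ⊆ E → E' = E}

/-- The saturation `Sat(L)` of the lattice `L`. -/
def satL {m : ℕ} (L : AddSubgroup (Fin m → ℤ)) : Set (Fin m → ℤ) :=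
  {u | ∃ d : ℤ, d ≠ 0 ∧ d • u ∈ L}

/-- A circuit of `Sat(L)`: a nonzero element of `Sat(L)` of minimal support
whose coordinates are relatively prime. -/
def IsCircuit {m : ℕ} (L : AddSubgroup (Fin m → ℤ)) (u : Fin m → ℤ) : Prop :=
  u ≠ 0 ∧ u ∈ satL L ∧
    (∀ v ∈ satL L, v ≠ 0 → suppZ v ⊆ suppZ u → suppZ v = suppZ u) ∧
    Finset.univ.gcd (fun i => (u i).natAbs) = 1

/-- Two exponent vectors are equivalent when their difference lies in `L`. -/
def latRel {m : ℕ} (L : AddSubgroup (Fin m → ℤ)) (a b : Fin m → ℕ) : Prop :=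
  (fun i => (a i : ℤ) - (b i : ℤ)) ∈ L

/-- Exponents having a distinct equivalent exponent. -/
def inM {m : ℕ} (L : AddSubgroup (Fin m → ℤ)) (a : Fin m → ℕ) : Prop :=
  ∃ b, b ≠ a ∧ latRel L a b

theorem latRel_symm {m : ℕ} {L : AddSubgroup (Fin m → ℤ)} {a b : Fin m → ℕ}
    (h : latRel L a b) : latRel L b a := by
  have := L.neg_mem h
  unfold latRel
  convert this using 1
  funext i; simp

theorem latRel_trans {m : ℕ} {L : AddSubgroup (Fin m → ℤ)} {a b c : Fin m → ℕ}
    (h : latRel L a b) (h' : latRel L b c) : latRel L a c := by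
  have := L.add_mem h h'
  unfold latRel
  convert this using 1
  funext i; simp

theorem latRel_eq_of_le {m : ℕ} {L : AddSubgroup (Fin m → ℤ)}
    (hLpos : ∀ u ∈ L, (∀ i, 0 ≤ u i) → u = 0) {a b : Fin m → ℕ}
    (h : latRel L a b) (hle : b ≤ a) : a = b := by
  have := hLpos _ h (fun i => by have := hle i; simp; exact this)
  funext i
  have := congrFun this i
  simp at this
  omega

theorem mono_eq {m : ℕ} (w : Fin m → ℕ) :
    mono K w = monomial (Finsupp.equivFunOnFinite.symm w) (1 : K) := by
  rw [monomial_eq, mono, Finsupp.prod_fintype]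
  · simp
  · simp

theorem mono_inj {m : ℕ} {a b : Fin m → ℕ} (h : mono K a = mono K b) : a = b := by
  rw [mono_eq, mono_eq] at h
  have := monomial_left_injective (one_ne_zero (α := K)) h
  exact Finsupp.equivFunOnFinite.symm.injective this

theorem mono_add {m : ℕ} (a b : Fin m → ℕ) : mono K (a + b) = mono K a * mono K b := by
  simp [mono, pow_add, Finset.prod_mul_distrib]

theorem mem_of_latRel {m : ℕ} {L : AddSubgroup (Fin m → ℤ)} {a b : Fin m → ℕ}
    (h : latRel L a b) : mono K a - mono K b ∈ latticeIdeal K L := by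
  have h1 : mono K (intPos fun i => (a i : ℤ) - (b i : ℤ))
      - mono K (intNeg fun i => (a i : ℤ) - (b i : ℤ)) ∈ latticeIdeal K L :=
    Ideal.subset_span ⟨_, h, rfl⟩
  have ha : a = (a ⊓ b) + intPos fun i => (a i : ℤ) - (b i : ℤ) := by
    funext i; simp [intPos]; omega
  have hb : b = (a ⊓ b) + intNeg fun i => (a i : ℤ) - (b i : ℤ) := by
    funext i; simp [intNeg]; omega
  have := Ideal.mul_mem_left _ (mono K (a ⊓ b)) h1
  rwa [mul_sub, ← mono_add, ← mono_add, ← ha, ← hb] at this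

theorem latRel_of_mem {m : ℕ} {L : AddSubgroup (Fin m → ℤ)} {a b : Fin m → ℕ}
    (h : mono K a - mono K b ∈ latticeIdeal K L) : latRel L a b := by
  let φ : MvPolynomial (Fin m) K →ₐ[K] AddMonoidAlgebra K ((Fin m → ℤ) ⧸ L) :=
    aeval (fun i => AddMonoidAlgebra.single (QuotientAddGroup.mk (Pi.single i 1)) 1)
  have hφ : ∀ w : Fin m → ℕ, φ (mono K w) =
      AddMonoidAlgebra.single (QuotientAddGroup.mk fun i => (w i : ℤ)) 1 := by
    intro w
    have key : ∀ s : Finset (Fin m), ∏ i ∈ s, (AddMonoidAlgebra.single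
        (QuotientAddGroup.mk (Pi.single i 1) : (Fin m → ℤ) ⧸ L) (1 : K)) ^ w i =
        AddMonoidAlgebra.single (QuotientAddGroup.mk
          (∑ i ∈ s, w i • (Pi.single i 1 : Fin m → ℤ)) : (Fin m → ℤ) ⧸ L) 1 := by
      intro s
      induction s using Finset.induction_on with
      | empty => simp [AddMonoidAlgebra.one_def]
      | insert i s hi ih =>
        rw [Finset.prod_insert hi, ih, Finset.sum_insert hi, AddMonoidAlgebra.single_pow,
          AddMonoidAlgebra.single_mul_single]
        simp
    simp only [φ, mono, map_prod, map_pow, aeval_X]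
    rw [key]
    congr 2
    funext j
    simp [Finset.sum_apply, Pi.single_apply]
  have hker : latticeIdeal K L ≤ RingHom.ker φ := by
    refine Ideal.span_le.2 ?_
    rintro f ⟨u, hu, rfl⟩
    simp only [SetLike.mem_coe, RingHom.mem_ker, map_sub, hφ, sub_eq_zero]
    congr 1
    rw [QuotientAddGroup.eq]
    convert L.neg_mem hu using 1
    funext i
    simp [intPos, intNeg]
    omega
  have := hker h
  simp only [RingHom.mem_ker, map_sub, hφ, sub_eq_zero] at this
  have := AddMonoidAlgebra.single_left_injective (one_ne_zero (α := K)) this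
  have := (QuotientAddGroup.eq).1 this
  have := L.neg_mem this
  unfold latRel
  convert this using 1
  funext i; simp; ring

/-- An indispensable monomial is a minimal element of `inM`. -/
theorem indisp_minimal {m : ℕ} {L : AddSubgroup (Fin m → ℤ)}
    (hLpos : ∀ u ∈ L, (∀ i, 0 ≤ u i) → u = 0) {w : Fin m → ℕ}
    (hw : IsIndispMonomial K L w) : inM L w ∧ ∀ w', inM L w' → w' ≤ w → w' = w := by
  constructor
  · obtain ⟨f, ⟨a, b, hab, hr, hf⟩, v, hv⟩ := hw
      {f | ∃ a b, a ≠ b ∧ latRel L a b ∧ f = mono K a - mono K b}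
      (by rintro f ⟨a, b, -, -, h⟩; exact ⟨a, b, h⟩) (by
        apply le_antisymm
        · refine Ideal.span_le.2 ?_
          rintro f ⟨a, b, -, h, rfl⟩
          exact mem_of_latRel K h
        · refine Ideal.span_le.2 ?_
          rintro f ⟨u, hu, rfl⟩
          by_cases h : intPos u = intNeg u
          · simp [h]
          · refine Ideal.subset_span ⟨_, _, h, ?_, rfl⟩
            unfold latRel
            convert hu using 1
            funext i; simp [intPos, intNeg])
    have hfI : f ∈ latticeIdeal K L := hf ▸ mem_of_latRel K hr
    have hf0 : f ≠ 0 := by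
      rw [hf]; exact fun h => hab (mono_inj K (sub_eq_zero.1 h))
    rcases hv with hv | hv
    · refine ⟨v, ?_, latRel_of_mem K (hv ▸ hfI)⟩
      rintro rfl; exact hf0 (by simp [hv])
    · refine ⟨v, ?_, latRel_symm (latRel_of_mem K (hv ▸ hfI))⟩
      rintro rfl; exact hf0 (by simp [hv])
  · rintro w' ⟨v', hv', hr'⟩ hle
    by_contra hne
    let S : Set (MvPolynomial (Fin m) K) :=
      {f | ∃ a b, a ≠ b ∧ a ≠ w ∧ b ≠ w ∧ latRel L a b ∧ f = mono K a - mono K b}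
    have hS : ∀ a b, a ≠ w → b ≠ w → latRel L a b → mono K a - mono K b ∈ Ideal.span S := by
      intro a b ha hb h
      by_cases hab : a = b
      · simp [hab]
      · exact Ideal.subset_span ⟨a, b, hab, ha, hb, h, rfl⟩
    have hv'w : v' ≠ w := by
      rintro rfl
      exact hv' (latRel_eq_of_le hLpos (latRel_symm hr') hle)
    have hww : w = (w - w') + w' := by
      funext i; have hi : w' i ≤ w i := hle i; simp; omega
    have hw1 : mono K w - mono K ((w - w') + v') ∈ Ideal.span S := by
      have := Ideal.mul_mem_left _ (mono K (w - w')) (hS _ _ hne hv'w hr')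
      rwa [mul_sub, ← mono_add, ← mono_add, ← hww] at this
    have hne2 : (w - w') + v' ≠ w := by
      intro h
      apply hv'
      funext i
      have h1 := congrFun h i
      have hi : w' i ≤ w i := hle i
      simp at h1
      omega
    have hr2 : latRel L ((w - w') + v') w := by
      have := latRel_symm hr'
      unfold latRel at this ⊢
      convert this using 1
      funext i; have hi : w' i ≤ w i := hle i; simp; omega
    have hw2 : ∀ b, b ≠ w → latRel L w b → mono K w - mono K b ∈ Ideal.span S := by
      intro b hb h
      have := Ideal.add_mem _ hw1 (hS _ _ hne2 hb (latRel_trans hr2 h))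
      simpa using this
    obtain ⟨f, ⟨a, b, hab, haw, hbw, hr, hf⟩, v, hv⟩ := hw S
      (by rintro f ⟨a, b, -, -, -, -, h⟩; exact ⟨a, b, h⟩) (by
        apply le_antisymm
        · refine Ideal.span_le.2 ?_
          rintro f ⟨a, b, -, -, -, h, rfl⟩
          exact mem_of_latRel K h
        · refine Ideal.span_le.2 ?_
          rintro f ⟨u, hu, rfl⟩
          have hr : latRel L (intPos u) (intNeg u) := by
            unfold latRel
            convert hu using 1
            funext i; simp [intPos, intNeg]
          by_cases h1 : intPos u = w
          · by_cases h2 : intNeg u = w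
            · simp [h1, h2]
            · rw [h1] at hr ⊢; exact hw2 _ h2 hr
          · by_cases h2 : intNeg u = w
            · rw [h2] at hr ⊢
              have := hw2 _ h1 (latRel_symm hr)
              rw [← neg_sub]
              exact neg_mem this
            · exact hS _ _ h1 h2 hr)
    have hf0 : f ≠ 0 := by
      rw [hf]; exact fun h => hab (mono_inj K (sub_eq_zero.1 h))
    have hvw : v ≠ w := by
      rintro rfl; exact hf0 (by rcases hv with hv | hv <;> simp [hv])
    have hc : coeff (Finsupp.equivFunOnFinite.symm w) f = 0 := by
      rw [hf, mono_eq, mono_eq]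
      simp [coeff_monomial, haw, hbw]
    rcases hv with hv | hv <;> rw [hv, mono_eq, mono_eq] at hc <;>
      simp [coeff_monomial, hvw] at hc

/-- A minimal element of `inM` is an indispensable monomial. -/
theorem indisp_of_minimal {m : ℕ} {L : AddSubgroup (Fin m → ℤ)} {w : Fin m → ℕ}
    (hw : inM L w) (hmin : ∀ w', inM L w' → w' ≤ w → w' = w) : IsIndispMonomial K L w := by
  intro B hB hspan
  obtain ⟨v, hvw, hr⟩ := hw
  let S : Set (Fin m →₀ ℕ) := {x | ∃ a b : Fin m → ℕ, x = Finsupp.equivFunOnFinite.symm a ∧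
    a ≠ b ∧ (mono K a - mono K b ∈ B ∨ mono K b - mono K a ∈ B)}
  have hle : latticeIdeal K L ≤ Ideal.span ((fun s => monomial s (1 : K)) '' S) := by
    rw [← hspan]
    refine Ideal.span_le.2 ?_
    intro f hf
    obtain ⟨a, b, rfl⟩ := hB f hf
    by_cases hab : a = b
    · simp [hab]
    · apply sub_mem
      · rw [mono_eq]
        exact Ideal.subset_span ⟨_, ⟨a, b, rfl, hab, Or.inl hf⟩, rfl⟩
      · rw [mono_eq]
        exact Ideal.subset_span ⟨_, ⟨b, a, rfl, Ne.symm hab, Or.inr hf⟩, rfl⟩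
  have hmem := hle (mem_of_latRel K hr)
  rw [mem_ideal_span_monomial_image] at hmem
  obtain ⟨x, ⟨a, b, rfl, hab, hf⟩, hx⟩ := hmem (Finsupp.equivFunOnFinite.symm w) (by
    rw [mem_support_iff, mono_eq, mono_eq]
    simp [coeff_monomial, hvw])
  have hBI : ∀ f ∈ B, f ∈ latticeIdeal K L := fun f hf => hspan ▸ Ideal.subset_span hf
  have haw : a = w := by
    apply hmin a
    · refine ⟨b, Ne.symm hab, ?_⟩
      rcases hf with hf | hf
      · exact latRel_of_mem K (hBI _ hf)
      · exact latRel_symm (latRel_of_mem K (hBI _ hf))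
    · intro i; exact hx i
  subst haw
  rcases hf with hf | hf
  · exact ⟨_, hf, b, Or.inl rfl⟩
  · exact ⟨_, hf, b, Or.inr rfl⟩

theorem suppN_mono {m : ℕ} {a b : Fin m → ℕ} (h : a ≤ b) : suppN a ⊆ suppN b := by
  intro i hi
  have hab : a i ≤ b i := h i
  simp only [suppN, Set.mem_ofPred_eq] at hi ⊢
  omega

theorem Tmin_minimal {m : ℕ} {L : AddSubgroup (Fin m → ℤ)} {E : Set (Fin m)}
    (hE : E ∈ Tmin K L) {a : Fin m → ℕ} (ha : inM L a) (hs : suppN a ⊆ E) : suppN a = E := by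
  obtain ⟨c, hc, hmin⟩ := WellFounded.has_min (wellFounded_lt (α := Fin m → ℕ))
    {c | inM L c ∧ c ≤ a} ⟨a, ha, le_rfl⟩
  have hind : IsIndispMonomial K L c := by
    apply indisp_of_minimal K hc.1
    intro w' hw' hle
    by_contra hne
    exact hmin w' ⟨hw', hle.trans hc.2⟩ (lt_of_le_of_ne hle hne)
  have := hE.2 (suppN c) ⟨c, hind, rfl⟩ ((suppN_mono hc.2).trans hs)
  exact le_antisymm hs (this ▸ suppN_mono hc.2)

open Classical in
theorem eval_mono_ind {m : ℕ} (E : Set (Fin m)) (w : Fin m → ℕ) :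
    eval (fun i => if i ∈ E then (1 : K) else 0) (mono K w) = if suppN w ⊆ E then 1 else 0 := by
  simp only [mono, map_prod, map_pow, eval_X]
  split_ifs with h
  · apply Finset.prod_eq_one
    intro i _
    by_cases hi : i ∈ E
    · simp [hi]
    · have : w i = 0 := by
        by_contra h0; exact hi (h h0)
      simp [this]
  · obtain ⟨i, hi, hiE⟩ := Set.not_subset.1 h
    apply Finset.prod_eq_zero (Finset.mem_univ i)
    have : w i ≠ 0 := hi
    simp [hiE, this]

theorem stmt3 {m : ℕ} (L : AddSubgroup (Fin m → ℤ))
    (hL0 : L ≠ ⊥) (hLpos : ∀ u ∈ L, (∀ i, 0 ≤ u i) → u = 0)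
    (s : ℕ) (B : Fin s → MvPolynomial (Fin m) K)
    (hB : ∀ j, IsBinomial K (B j) ∧ B j ∈ latticeIdeal K L)
    (hrad : (latticeIdeal K L).radical = (Ideal.span (Set.range B)).radical) :
    (Tmin K L).ncard ≤ 2 * s := by
  classical
  choose a b hab using fun j => (hB j).1
  have hsub : Tmin K L ⊆
      ((Finset.univ.image (fun j => suppN (a j)) ∪ Finset.univ.image (fun j => suppN (b j)) :
        Finset (Set (Fin m))) : Set (Set (Fin m))) := by
    intro E hE
    obtain ⟨w, hw, hEw⟩ := hE.1
    obtain ⟨⟨v, hvw, hr⟩, hmin⟩ := indisp_minimal K hLpos hw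
    -- the supports of `w` and `v` are disjoint
    have hdisj : ∀ i, v i ≠ 0 → w i = 0 := by
      intro i hvi
      by_contra hwi
      have h1 : inM L (w - w ⊓ v) := by
        refine ⟨v - w ⊓ v, ?_, ?_⟩
        · intro h
          apply hvw
          funext k
          have := congrFun h k
          simp at this
          omega
        · unfold latRel at hr ⊢
          convert hr using 1
          funext k; simp
      have h2 := congrFun (hmin _ h1 (fun k => by simp)) i
      simp at h2
      omega
    have hv0 : ∃ i, v i ≠ 0 := by
      by_contra! h
      exact hvw (latRel_eq_of_le hLpos hr (fun i => by simp [h i])).symm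
    have hvE : ¬ suppN v ⊆ E := by
      obtain ⟨i, hi⟩ := hv0
      intro h
      have : i ∈ suppN w := hEw ▸ h hi
      exact this (hdisj i hi)
    have hwE : suppN w ⊆ E := hEw.ge
    let φ := eval (fun i => if i ∈ E then (1 : K) else 0)
    have hφ : ∀ w, φ (mono K w) = if suppN w ⊆ E then 1 else 0 := fun w => by
      simp only [φ]; convert eval_mono_ind K E w
    have hex : ∃ j, φ (B j) ≠ 0 := by
      by_contra! h
      have h1 : mono K w - mono K v ∈ (Ideal.span (Set.range B)).radical :=
        hrad ▸ Ideal.le_radical (mem_of_latRel K hr)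
      have h2 : (Ideal.span (Set.range B)).radical ≤ RingHom.ker φ := by
        apply (Ideal.IsPrime.radical_le_iff (RingHom.ker_isPrime φ)).2
        refine Ideal.span_le.2 ?_
        rintro _ ⟨j, rfl⟩
        exact h j
      have h3 := h2 h1
      rw [RingHom.mem_ker, map_sub, hφ, hφ, if_pos hwE, if_neg hvE] at h3
      simp at h3
    obtain ⟨j, hj⟩ := hex
    have hne : a j ≠ b j := by
      intro h; apply hj; rw [hab j, h]; simp
    have hrel : latRel L (a j) (b j) := latRel_of_mem K (hab j ▸ (hB j).2)
    have hor : suppN (a j) ⊆ E ∨ suppN (b j) ⊆ E := by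
      by_contra! h
      apply hj
      rw [hab j, map_sub, hφ, hφ, if_neg h.1, if_neg h.2, sub_zero]
    simp only [Finset.coe_union, Finset.coe_image, Finset.coe_univ, Set.image_univ]
    rcases hor with h | h
    · exact Or.inl ⟨j, Tmin_minimal K hE ⟨b j, hne.symm, hrel⟩ h⟩
    · exact Or.inr ⟨j, Tmin_minimal K hE ⟨a j, hne, latRel_symm hrel⟩ h⟩
  calc (Tmin K L).ncard ≤ _ := Set.ncard_le_ncard hsub (Finset.finite_toSet _)
    _ = _ := Set.ncard_coe_finset _
    _ ≤ _ := Finset.card_union_le _ _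
    _ ≤ s + s := add_le_add (Finset.card_image_le.trans (by simp))
        (Finset.card_image_le.trans (by simp))
    _ = 2 * s := by ring
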